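/- Let (x,y) be an N-position of WYT(a,b) with x ≤ y, and write y − x = aℓ + r with integers ℓ ≥ 0 and 0 ≤ r < a. Then every diagonal move from (x,y) to a P-position lands in (x_ℓ, y_ℓ) or (x_{ℓ+1}, y_{ℓ+1}); in particular, at most two P-positions are reachable from (x,y) by diagonal moves. -/

import Mathlib

/-- A move of the game WYT(a,b): reduce `x` by `ε` and `y` by `δ` with
`0 ≤ ε ≤ x`, `0 ≤ δ ≤ y`, `ε + δ > 0`, and `|ε - δ| < a` or `min(ε,δ) < b`. -/
def WytMove (a b : ℕ) (p q : ℕ × ℕ) : Prop :=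
  q.1 ≤ p.1 ∧ q.2 ≤ p.2 ∧ q ≠ p ∧
    ((((p.1 - q.1 : ℕ) : ℤ) - ((p.2 - q.2 : ℕ) : ℤ)).natAbs < a ∨
      min (p.1 - q.1) (p.2 - q.2) < b)

/-- The minimum `b`-excludant of a finite set `S = {s₁ < s₂ < … < sₗ}` of
nonnegative integers: `0` if `S = ∅`, and otherwise `sᵢ + b` where `i` is the
smallest index with `s_{i+1} - sᵢ > b` (with `s_{ℓ+1} = +∞`), i.e. `sᵢ` is the
smallest element of `S` followed by a gap larger than `b`. -/
noncomputable def mexb (b : ℕ) (S : Finset ℕ) : ℕ :=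
  if S.Nonempty then sInf {s : ℕ | s ∈ S ∧ ∀ t ∈ S, s < t → s + b < t} + b else 0

/-- The set `{x₀, y₀, …, x_{m-1}, y_{m-1}}` of the first `m` pairs of the
sequence of P-positions of WYT(a,b). -/
noncomputable def wytF (a b : ℕ) : ℕ → Finset ℕ
  | 0 => ∅
  | m + 1 => wytF a b m ∪ {mexb b (wytF a b m), mexb b (wytF a b m) + a * m}

/-- `x_m = mex_b {x₀, y₀, …, x_{m-1}, y_{m-1}}` (so `x₀ = 0`). -/
noncomputable def wytX (a b m : ℕ) : ℕ := mexb b (wytF a b m)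

/-- `y_m = x_m + a·m` (so `y₀ = 0`). -/
noncomputable def wytY (a b m : ℕ) : ℕ := wytX a b m + a * m

/-- The P-positions of WYT(a,b): the pairs `(x_m, y_m)` and `(y_m, x_m)`. -/
def WytP (a b : ℕ) (p : ℕ × ℕ) : Prop :=
  ∃ m : ℕ, p = (wytX a b m, wytY a b m) ∨ p = (wytY a b m, wytX a b m)

/-!
A diagonal move from `p` to `q` changes the difference `p.2 - p.1` by less than `a`, whereas the
differences of the P-positions are multiples of `a`. No multiples of `a` other than `a * l` and
`a * (l + 1)` are that close to `y - x = a * l + r`, and a nonnegative multiple `a * n` is the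
difference of exactly one P-position, namely `(x_n, y_n)`.
-/

theorem eq_ediv_or_eq_ediv_add_one_of_abs_sub_mul_lt {a k n : ℤ} (h : |n - a * k| < a) :
    k = n / a ∨ k = n / a + 1 := by
  have ha : 0 < a := (abs_nonneg _).trans_lt h
  obtain ⟨hlower, hupper⟩ := abs_sub_lt_iff.mp h
  have hk_le : k ≤ n / a + 1 := by
    rw [← sub_le_iff_le_add, Int.le_ediv_iff_mul_le ha]
    linarith
  have hlt_k : n / a < k + 1 := by
    rw [Int.ediv_lt_iff_lt_mul ha]
    linarith
  lia

theorem abs_sub_sub_sub_lt_of_natAbs_lt {a : ℕ} {p q : ℕ × ℕ} (hle : q ≤ p)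
    (h : (((p.1 - q.1 : ℕ) : ℤ) - ((p.2 - q.2 : ℕ) : ℤ)).natAbs < a) :
    |((p.2 : ℤ) - p.1) - ((q.2 : ℤ) - q.1)| < a := by
  rw [← Nat.cast_lt (α := ℤ), Int.natCast_natAbs, Nat.cast_sub hle.1, Nat.cast_sub hle.2] at h
  calc |((p.2 : ℤ) - p.1) - ((q.2 : ℤ) - q.1)|
      = |((p.1 : ℤ) - q.1) - ((p.2 : ℤ) - q.2)| := by rw [abs_sub_comm]; ring_nf
    _ < a := h

namespace WytP

variable {a b : ℕ} {q : ℕ × ℕ}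

theorem dvd_snd_sub_fst (hq : WytP a b q) : (a : ℤ) ∣ (q.2 : ℤ) - q.1 := by
  obtain ⟨m, rfl | rfl⟩ := hq
  · exact ⟨m, by simp [wytY]⟩
  · exact ⟨-m, by simp [wytY]⟩

theorem eq_of_snd_sub_fst_eq_mul (hq : WytP a b q) (ha : a ≠ 0) {n : ℕ}
    (h : (q.2 : ℤ) - q.1 = a * n) : q = (wytX a b n, wytY a b n) := by
  obtain ⟨m, rfl | rfl⟩ := hq
  · have hmn : m = n := by simpa [wytY, ha] using h
    rw [hmn]
  · have hmn : m + n = 0 := by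
      have hsum : (a : ℤ) * (m + n) = 0 := by
        simp only [wytY] at h
        push_cast at h
        linarith
      exact_mod_cast (mul_eq_zero_iff_left (Nat.cast_ne_zero.mpr ha)).mp hsum
    obtain ⟨rfl, rfl⟩ := Nat.add_eq_zero_iff.mp hmn
    simp [wytY]

end WytP

/-- From an N-position `(x,y)` of WYT(a,b) with `x ≤ y` and `y - x = aℓ + r`,
`0 ≤ r < a`, every diagonal move (one with `|ε - δ| < a`) to a P-position
lands in `(x_ℓ, y_ℓ)` or `(x_{ℓ+1}, y_{ℓ+1})`. -/
theorem wyt_diagonal_moves (a b : ℕ) (ha : 0 < a) (hb : 0 < b)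
    (x y l r : ℕ) (hxy : x ≤ y) (hN : ¬ WytP a b (x, y))
    (hlr : y - x = a * l + r) (hr : r < a)
    (q : ℕ × ℕ) (hmv : WytMove a b (x, y) q)
    (hdiag : (((x - q.1 : ℕ) : ℤ) - ((y - q.2 : ℕ) : ℤ)).natAbs < a)
    (hq : WytP a b q) :
    q = (wytX a b l, wytY a b l) ∨ q = (wytX a b (l + 1), wytY a b (l + 1)) := by
  obtain ⟨k, hk⟩ := hq.dvd_snd_sub_fst
  have hclose : |((y : ℤ) - x) - a * k| < a :=
    hk ▸ abs_sub_sub_sub_lt_of_natAbs_lt (p := (x, y)) ⟨hmv.1, hmv.2.1⟩ hdiag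
  have hl : ((y : ℤ) - x) / a = l := by
    rw [← Nat.cast_sub hxy, ← Int.natCast_ediv, hlr, Nat.mul_add_div ha,
      Nat.div_eq_of_lt hr, add_zero]
  obtain rfl | rfl := hl ▸ eq_ediv_or_eq_ediv_add_one_of_abs_sub_mul_lt hclose
  · exact .inl (hq.eq_of_snd_sub_fst_eq_mul ha.ne' hk)
  · exact .inr (hq.eq_of_snd_sub_fst_eq_mul ha.ne' (mod_cast hk))
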